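/- arXiv:1203.0521 — 2 statements merged into one kernel-verified Lean document; each statement's English description precedes it below -/
import Mathlib

section
/- Each double coset W_J x W_J^◇ in W is stable under the anti-involution w ↦ ◇(w)⁻¹. In particular, the unique longest element of each (W_J, W_J^◇)-double coset belongs to I_◇. -/
set_option synthInstance.maxHeartbeats 1000000
set_option maxHeartbeats 2000000

open scoped Classical

noncomputable section

namespace LY

/-! ## The coefficient field `ℚ(q)` -/

/-- The field `ℚ(q)` of rational functions. -/
abbrev K : Type := RatFunc ℚ

/-- The indeterminate `q`. -/
def qK : K := RatFunc.X

/-- The inclusion `ℤ[q] → ℚ(q)`. -/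
def toK (p : Polynomial ℤ) : K := algebraMap (Polynomial ℚ) K (p.map (Int.castRingHom ℚ))

/-- Evaluation of `p ∈ ℤ[q]` at `−q`, as an element of `ℚ(q)`; i.e. `p(−q)`. -/
def atNegQ (p : Polynomial ℤ) : K := Polynomial.eval₂ (Int.castRingHom K) (-qK) p

/-- The standard basis element `T_w` (resp. `a_w`) of the function model `W → ℚ(q)`
of the Hecke algebra (resp. of the Lusztig–Vogan module `M`). -/
def TT {W : Type} (w : W) : W → K := fun y => if y = w then 1 else 0

variable {B W : Type} [Group W] {M : CoxeterMatrix B}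

/-- The Bruhat order on a Coxeter group: `u ≤ v` iff `v` is obtained from `u` by successive
right multiplications by reflections, each increasing the length. -/
def BruhatLE (cs : CoxeterSystem M W) (u v : W) : Prop :=
  Relation.ReflTransGen
    (fun a b => cs.length a < cs.length b ∧ ∃ t, cs.IsReflection t ∧ b = a * t) u v

/-- Connectedness of the Coxeter diagram of `M`. -/
def DiagramConnected (M : CoxeterMatrix B) : Prop :=
  ∀ i j : B, Relation.ReflTransGen (fun a b => a ≠ b ∧ M a b ≠ 2) i j

/-- An automorphism of `W` preserving the set `S` of simple reflections, i.e. an element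
of `A = Aut(W,S)`. -/
def IsDiagAut (cs : CoxeterSystem M W) (a : MulAut W) : Prop :=
  (⇑a) '' (Set.range cs.simple) = Set.range cs.simple

/-! ## The affine setting -/

/-- All the data and axioms describing the setting: `(W,S)` is the Coxeter group of an
untwisted connected affine Dynkin diagram (an irreducible affine Weyl group); `Λ` is the
subgroup of translations (elements with finite conjugacy class), free abelian of finite
rank and of finite index; `s₀` is a hyperspecial vertex, `J = S − {s₀}`, `W_J` is the
finite subgroup generated by `J` with longest element `w_J`; `*` is the involution of `W`
given by `w* = w_J w w_J` on `W_J` and `λ* = −(ʷᴶλ)` on `Λ`; `pr` is the projection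
`W → W_J` along `Λ`; `ρ` is the conjugation action of `W` on `Λ_ℚ ≅ ℚ^rank`
(via the identification `freeIso` of `Λ` with `ℤ^rank`). -/
structure AffineData (cs : CoxeterSystem M W) where
  finB : Finite B
  conn : DiagramConnected M
  infW : Infinite W
  /-- the subgroup `Λ` of translations -/
  Lam : Subgroup W
  hLam_mem : ∀ w : W, w ∈ Lam ↔ {x : W | IsConj w x}.Finite
  hLam_normal : Lam.Normal
  hLam_comm : ∀ a ∈ Lam, ∀ b ∈ Lam, a * b = b * a
  hLam_index : Lam.FiniteIndex
  /-- `Λ` is free abelian of finite rank -/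
  rank : ℕ
  freeIso : Lam ≃* Multiplicative (Fin rank → ℤ)
  /-- the hyperspecial vertex `s₀` -/
  s0 : W
  hs0_S : s0 ∈ Set.range cs.simple
  /-- `s₀` is hyperspecial: the projection `W → W/Λ` restricts to an isomorphism from the
  subgroup generated by `S − {s₀}` onto `W/Λ`. -/
  hs0_hyper : ∀ w : W, ∃! u : W,
    u ∈ Subgroup.closure (Set.range cs.simple \ {s0}) ∧ w * u⁻¹ ∈ Lam
  hWJ_fin : (Subgroup.closure (Set.range cs.simple \ {s0}) : Set W).Finite
  /-- the longest element `w_J` of `W_J` -/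
  wJ : W
  hwJ_mem : wJ ∈ Subgroup.closure (Set.range cs.simple \ {s0})
  hwJ_max : ∀ u ∈ Subgroup.closure (Set.range cs.simple \ {s0}), cs.length u ≤ cs.length wJ
  /-- the involution `*` of `W` -/
  st : MulAut W
  hst_inv : ∀ w : W, st (st w) = w
  hst_J : ∀ u ∈ Subgroup.closure (Set.range cs.simple \ {s0}), st u = wJ * u * wJ
  hst_Lam : ∀ l ∈ Lam, st l = (wJ * l * wJ⁻¹)⁻¹
  hst_S : ∀ s ∈ Set.range cs.simple, st s ∈ Set.range cs.simple
  /-- lower Bruhat intervals are finite -/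
  hBruhat_fin : ∀ w : W, {y : W | BruhatLE cs y w}.Finite
  /-- the projection `W → W_J` along `Λ` (`w ↦ w̄`) -/
  pr : W → W
  hpr : ∀ w : W, pr w ∈ Subgroup.closure (Set.range cs.simple \ {s0}) ∧ w * (pr w)⁻¹ ∈ Lam
  /-- the conjugation action of `W` on `Λ_ℚ ≅ ℚ^rank` -/
  rho : W → ((Fin rank → ℚ) →ₗ[ℚ] (Fin rank → ℚ))
  hrho : ∀ (w : W) (l : Lam),
    rho w (fun i => ((Multiplicative.toAdd (freeIso l)) i : ℚ)) =
      fun i => ((Multiplicative.toAdd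
        (freeIso ⟨w * (l : W) * w⁻¹, hLam_normal.conj_mem _ l.2 w⟩)) i : ℚ)

namespace AffineData

variable {cs : CoxeterSystem M W} (D : AffineData cs)

/-- The set `J = S − {s₀}`. -/
def Jset : Set W := Set.range cs.simple \ {D.s0}

/-- The finite Weyl group `W_J`. -/
def WJ : Subgroup W := Subgroup.closure D.Jset

/-- `λ ∈ Λ` is a dominant translation (`λ ∈ Λ⁺`). -/
def IsDominant (l : W) : Prop :=
  l ∈ D.Lam ∧ cs.length (l * D.wJ) = cs.length l + cs.length D.wJ

/-- The embedding `Λ → Λ_ℚ = ℚ^rank`. -/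
def iota (l : D.Lam) : Fin D.rank → ℚ :=
  fun i => ((Multiplicative.toAdd (D.freeIso l)) i : ℚ)

/-- `e(A)`: the dimension of the `(−1)`-eigenspace of a linear endomorphism `A` of `Λ_ℚ`. -/
def eNeg (f : (Fin D.rank → ℚ) →ₗ[ℚ] (Fin D.rank → ℚ)) : ℕ :=
  Module.finrank ℚ (Module.End.eigenspace (f : Module.End ℚ (Fin D.rank → ℚ)) (-1))

/-- The map `A_u : λ ↦ ᵘ(λ*) = −(ᵘʷᴶλ)` on `Λ_ℚ`, for `u ∈ W_J`. -/
def Amap (u : W) : (Fin D.rank → ℚ) →ₗ[ℚ] (Fin D.rank → ℚ) := - D.rho (u * D.wJ)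

/-- The invariant `φ(w) = e(A_{w̄}) − e(A_e)` for `w ∈ I_*`. -/
def phi (w : W) : ℤ := (D.eNeg (D.Amap (D.pr w)) : ℤ) - (D.eNeg (D.Amap 1) : ℤ)

/-- The double coset `W_J x W_J`. -/
def DCoset (x : W) : Set W := {y : W | ∃ u ∈ D.WJ, ∃ v ∈ D.WJ, y = u * x * v}

/-- The set `H = J ∩ bJb⁻¹`. -/
def Hset (b : W) : Set W := D.Jset ∩ ((fun s => b * s * b⁻¹) '' D.Jset)

/-- The set `H* ⊆ J`, image of `H` under `*`. -/
def Hstar (b : W) : Set W := (⇑D.st) '' D.Hset b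

/-- The subgroup `W_{H*}` generated by `H*`. -/
def WHstar (b : W) : Subgroup W := Subgroup.closure (D.Hstar b)

/-- The reflection representation `R'` of `W_{H*}`, as a subspace of `Λ_ℚ`:
the span of the vectors `λ − ˢλ` for `λ ∈ Λ`, `s ∈ H*`. -/
def Rprime (b : W) : Submodule ℚ (Fin D.rank → ℚ) :=
  Submodule.span ℚ
    {v : Fin D.rank → ℚ | ∃ l : D.Lam, ∃ s ∈ D.Hstar b,
      v = D.iota l - D.iota ⟨s * (l : W) * s⁻¹, D.hLam_normal.conj_mem _ l.2 s⟩}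

/-- `e'(A)`: the dimension of the `(−1)`-eigenspace of an endomorphism `A` of `R'`. -/
def eNeg' {b : W} (f : ↥(D.Rprime b) →ₗ[ℚ] ↥(D.Rprime b)) : ℕ :=
  Module.finrank ℚ (Module.End.eigenspace (f : Module.End ℚ ↥(D.Rprime b)) (-1))

/-- `φ'(z) = e'(B_z) − e'(B_e)`, where `B_u : x ↦ −u·(w_{H*}·x)` on `R'`; here
`rho'` is the conjugation action of `W_{H*}` on `R'` and `wHs` is the longest element
of `W_{H*}`. -/
def phiP {b : W} (rho' : W → (↥(D.Rprime b) →ₗ[ℚ] ↥(D.Rprime b))) (wHs z : W) : ℤ :=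
  (D.eNeg' (-(rho' (z * wHs))) : ℤ) - (D.eNeg' (-(rho' wHs)) : ℤ)

/-- Membership in `A_Λ ⊆ A = Aut(W,S)`: automorphisms acting on `Λ` as conjugation by some
element of `W_J`. -/
def InALam (a : MulAut W) : Prop :=
  IsDiagAut cs a ∧ ∃ w ∈ D.WJ, ∀ l ∈ D.Lam, a l = w * l * w⁻¹

/-- Membership in the coset `A_Λ* = {a ∘ * : a ∈ A_Λ}`. -/
def InALamStar (c : MulAut W) : Prop := ∃ a : MulAut W, D.InALam a ∧ c = a * D.st

/-- The double coset `W_J x W_J^◇`, where `W_J^◇` is the subgroup generated by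
`J^◇ = S − {s₁}`. -/
def DCosetDia (s1 : W) (x : W) : Set W :=
  {y : W | ∃ u ∈ D.WJ, ∃ v ∈ Subgroup.closure (Set.range cs.simple \ {s1}), y = u * x * v}


end AffineData

/-! ## The Hecke algebra, the Lusztig–Vogan module, and the polynomials `P`, `P^σ` -/

/-- The Hecke algebra of `(W,S)` over `ℚ(q)` (modelled on functions `W → ℚ(q)`, with basis
`TT w = T_w`), together with its bar involution, and the Kazhdan–Lusztig polynomials
`P_{y,w} ∈ ℤ[q]` characterized by their defining properties. -/
structure HeckeData (cs : CoxeterSystem M W) where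
  /-- the involution `q ↦ q⁻¹` of `ℚ(q)` -/
  barK : K →+* K
  hbarK_X : barK qK = qK⁻¹
  hbarK_inv : ∀ x, barK (barK x) = x
  /-- the multiplication of the Hecke algebra -/
  mulH : (W → K) →ₗ[K] (W → K) →ₗ[K] (W → K)
  hmul_assoc : ∀ x y z : W → K, mulH (mulH x y) z = mulH x (mulH y z)
  hmul_one : ∀ x : W → K, mulH (TT 1) x = x ∧ mulH x (TT 1) = x
  hmul_TT : ∀ u v : W, cs.length (u * v) = cs.length u + cs.length v →
    mulH (TT u) (TT v) = TT (u * v)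
  hmul_Ts : ∀ s ∈ Set.range cs.simple,
    mulH (TT s) (TT s) = (qK - 1) • TT s + qK • TT (1 : W)
  /-- the bar involution of the Hecke algebra: the ring involution with `q ↦ q⁻¹`,
  `T_w ↦ (T_{w⁻¹})⁻¹` -/
  barH : (W → K) →+ (W → K)
  hbarH_inv : ∀ x, barH (barH x) = x
  hbarH_smul : ∀ (c : K) (x : W → K), barH (c • x) = barK c • barH x
  hbarH_mul : ∀ x y : W → K, barH (mulH x y) = mulH (barH x) (barH y)
  hbarH_T : ∀ w : W, mulH (barH (TT w)) (TT w⁻¹) = TT (1 : W) ∧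
    mulH (TT w⁻¹) (barH (TT w)) = TT (1 : W)
  /-- the Kazhdan–Lusztig polynomials `P_{y,w}` -/
  P : W → W → Polynomial ℤ
  hP_supp : ∀ y w : W, ¬ BruhatLE cs y w → P y w = 0
  hP_diag : ∀ w : W, P w w = 1
  hP_deg : ∀ y w : W, BruhatLE cs y w → y ≠ w →
    2 * (P y w).natDegree + 1 ≤ cs.length w - cs.length y
  hP_dual : ∀ w : W,
    (qK ^ cs.length w) • barH (fun y => if BruhatLE cs y w then toK (P y w) else 0)
      = fun y => if BruhatLE cs y w then toK (P y w) else 0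

/-- The Lusztig–Vogan module `M` over the Hecke algebra `H'` with parameter `q²`, attached to
a length-preserving involutive automorphism `star` of `(W,S)`, together with its bar
involution, and the polynomials `P^σ_{y,w} ∈ ℤ[q]` (for `y, w ∈ I_*`) characterized by their
defining properties.  Both `H'` and `M` are modelled on functions `W → ℚ(q)`; the basis
element `a_w` of `M` (for `w ∈ I_*`) is `TT w`. -/
structure LVData (cs : CoxeterSystem M W) (star : MulAut W) where
  /-- the involution `q ↦ q⁻¹` of `ℚ(q)` -/
  barK : K →+* K
  hbarK_X : barK qK = qK⁻¹
  hbarK_inv : ∀ x, barK (barK x) = x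
  /-- the multiplication of the Hecke algebra `H'` with parameter `q²` -/
  mulH' : (W → K) →ₗ[K] (W → K) →ₗ[K] (W → K)
  hmul'_assoc : ∀ x y z : W → K, mulH' (mulH' x y) z = mulH' x (mulH' y z)
  hmul'_one : ∀ x : W → K, mulH' (TT 1) x = x ∧ mulH' x (TT 1) = x
  hmul'_TT : ∀ u v : W, cs.length (u * v) = cs.length u + cs.length v →
    mulH' (TT u) (TT v) = TT (u * v)
  hmul'_Ts : ∀ s ∈ Set.range cs.simple,
    mulH' (TT s) (TT s) = (qK ^ 2 - 1) • TT s + (qK ^ 2) • TT (1 : W)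
  /-- the bar involution of `H'` -/
  barH' : (W → K) →+ (W → K)
  hbarH'_inv : ∀ x, barH' (barH' x) = x
  hbarH'_smul : ∀ (c : K) (x : W → K), barH' (c • x) = barK c • barH' x
  hbarH'_mul : ∀ x y : W → K, barH' (mulH' x y) = mulH' (barH' x) (barH' y)
  hbarH'_T : ∀ w : W, mulH' (barH' (TT w)) (TT w⁻¹) = TT (1 : W) ∧
    mulH' (TT w⁻¹) (barH' (TT w)) = TT (1 : W)
  /-- the action of `H'` on the module `M` -/
  actM : (W → K) →ₗ[K] (W → K) →ₗ[K] (W → K)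
  hact_one : ∀ m : W → K, actM (TT 1) m = m
  hact_mul : ∀ (h h' : W → K) (m : W → K), actM (mulH' h h') m = actM h (actM h' m)
  hact1 : ∀ s ∈ Set.range cs.simple, ∀ w : W, star w = w⁻¹ →
    s * w = w * star s → cs.length w < cs.length (s * w) →
    actM (TT s) (TT w) = qK • TT w + (qK + 1) • TT (s * w)
  hact2 : ∀ s ∈ Set.range cs.simple, ∀ w : W, star w = w⁻¹ →
    s * w = w * star s → cs.length (s * w) < cs.length w →
    actM (TT s) (TT w) = (qK ^ 2 - qK - 1) • TT w + (qK ^ 2 - qK) • TT (s * w)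
  hact3 : ∀ s ∈ Set.range cs.simple, ∀ w : W, star w = w⁻¹ →
    s * w ≠ w * star s → cs.length w < cs.length (s * w) →
    actM (TT s) (TT w) = TT (s * w * star s)
  hact4 : ∀ s ∈ Set.range cs.simple, ∀ w : W, star w = w⁻¹ →
    s * w ≠ w * star s → cs.length (s * w) < cs.length w →
    actM (TT s) (TT w) = (qK ^ 2 - 1) • TT w + (qK ^ 2) • TT (s * w * star s)
  /-- the bar involution of the module `M` -/
  barM : (W → K) →+ (W → K)
  hbarM_inv : ∀ m : W → K, barM (barM m) = m
  hbarM_smul : ∀ (c : K) (m : W → K), barM (c • m) = barK c • barM m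
  hbarM_act : ∀ (h m : W → K), barM (actM h m) = actM (barH' h) (barM m)
  hbarM_one : barM (TT 1) = TT (1 : W)
  /-- the Lusztig–Vogan polynomials `P^σ_{y,w}` -/
  Psig : W → W → Polynomial ℤ
  hPsig_supp : ∀ y w : W, ¬ (BruhatLE cs y w ∧ star y = y⁻¹) → Psig y w = 0
  hPsig_diag : ∀ w : W, star w = w⁻¹ → Psig w w = 1
  hPsig_deg : ∀ y w : W, star w = w⁻¹ → star y = y⁻¹ → BruhatLE cs y w → y ≠ w →
    2 * (Psig y w).natDegree + 1 ≤ cs.length w - cs.length y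
  hPsig_dual : ∀ w : W, star w = w⁻¹ →
    (qK ^ (2 * cs.length w)) •
        barM (fun y => if BruhatLE cs y w ∧ star y = y⁻¹ then toK (Psig y w) else 0)
      = fun y => if BruhatLE cs y w ∧ star y = y⁻¹ then toK (Psig y w) else 0

/-! ## The `Z`-polynomials -/

/-- `Z_w(q) = Σ_{y ≤ w} P_{y,w}(q) q^{ℓ(y)}`. -/
def Zpoly (cs : CoxeterSystem M W) (HD : HeckeData cs) (w : W) : K :=
  ∑ᶠ y : W, if BruhatLE cs y w then toK (HD.P y w) * qK ^ cs.length y else 0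

/-- `Z_w(−q) = Σ_{y ≤ w} P_{y,w}(−q) (−q)^{ℓ(y)}`. -/
def ZpolyNeg (cs : CoxeterSystem M W) (HD : HeckeData cs) (w : W) : K :=
  ∑ᶠ y : W, if BruhatLE cs y w then atNegQ (HD.P y w) * (-qK) ^ cs.length y else 0

/-- `Z^σ_w(q) = Σ_{y ≤ w, y ∈ I_*} P^σ_{y,w}(q) q^{ℓ(y)} ((q−1)/(q+1))^{φ(y)}`. -/
def Zsig (cs : CoxeterSystem M W) (D : AffineData cs) (LD : LVData cs D.st) (w : W) : K :=
  ∑ᶠ y : W, if BruhatLE cs y w ∧ D.st y = y⁻¹ then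
    toK (LD.Psig y w) * qK ^ cs.length y * ((qK - 1) / (qK + 1)) ^ D.phi y else 0

/-!
An element `◇` of `A_Λ*` acts on `Λ` by `λ ↦ -ᵍλ` for some `g ∈ W_J`. If `g` also lies in
`W_J^◇ = ◇(W_J)`, then for `y = uλ` with `u ∈ W_J` and `λ ∈ Λ` one computes
`◇(y)⁻¹ = (g u⁻¹) y (g⁻¹ ◇(u)⁻¹) ∈ W_J y W_J^◇`, so every double coset is stable. That `g ∈ W_J^◇`
is seen on left inversions: `g` is the product of a sequence of its inversions, and each of these
lies in `W_J^◇`. Longest elements of double cosets are unique because `t` is an inversion of `xy`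
exactly when it is an inversion of `x` or `x⁻¹tx` is one of `y`, but not both.
-/

section Inversions

variable {B W : Type*} [Group W] {M : CoxeterMatrix B} (cs : CoxeterSystem M W)

variable (W) in
/-- The conjugation action of `W` on the group of sign functions `W → {±1}`. -/
def conjSignAction : W →* MulAut (W → ℤˣ) :=
  (mulAutArrow (G := ConjAct W) (A := W)).comp ConjAct.toConjAct.toMonoidHom

theorem conjSignAction_apply (w t : W) (F : W → ℤˣ) :
    conjSignAction W w F t = F (w⁻¹ * t * w) := by
  change F ((ConjAct.toConjAct w)⁻¹ • t) = _
  rw [← map_inv, ConjAct.toConjAct_smul, inv_inv]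

theorem conjSignAction_mulSingle (w t : W) (ε : ℤˣ) :
    conjSignAction W w (Pi.mulSingle t ε) = Pi.mulSingle (w * t * w⁻¹) ε := by
  funext r
  have h : w⁻¹ * r * w = t ↔ r = w * t * w⁻¹ := by
    rw [mul_assoc, inv_mul_eq_iff_eq_mul, ← eq_mul_inv_iff_mul_eq]
  simp only [conjSignAction_apply, Pi.mulSingle_apply, h]

/-- The image of a simple reflection `s` in `{±1}^W ⋊ W`: the pair of the sign function that is
`-1` exactly at `s`, and `s` itself. -/
def signedSimple (i : B) : (W → ℤˣ) ⋊[conjSignAction W] W :=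
  ⟨Pi.mulSingle (cs.simple i) (-1), cs.simple i⟩

theorem signedSimple_mul_pow (i j : B) (n : ℕ) :
    (signedSimple cs i * signedSimple cs j) ^ n =
      ⟨∏ k ∈ Finset.range (2 * n),
          Pi.mulSingle ((cs.simple i * cs.simple j) ^ k * cs.simple i) (-1),
        (cs.simple i * cs.simple j) ^ n⟩ := by
  induction n with
  | zero => exact (pow_zero _).trans (by simp only [mul_zero, pow_zero]; rfl)
  | succ n ih =>
    have hconj (m : ℕ) : (cs.simple i * cs.simple j) ^ n *
        ((cs.simple i * cs.simple j) ^ m * cs.simple i) * ((cs.simple i * cs.simple j) ^ n)⁻¹ =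
          (cs.simple i * cs.simple j) ^ (2 * n + m) * cs.simple i := by
      rw [← inv_pow, mul_inv_rev, cs.inv_simple, cs.inv_simple, mul_assoc, mul_assoc,
        ← mul_pow_mul, ← mul_assoc, ← mul_assoc, ← pow_add, ← pow_add]
      congr 2
      ring
    have hsingle : (signedSimple cs i * signedSimple cs j).left =
        Pi.mulSingle ((cs.simple i * cs.simple j) ^ 0 * cs.simple i) (-1) *
          Pi.mulSingle ((cs.simple i * cs.simple j) ^ 1 * cs.simple i) (-1) := by
      simp only [signedSimple, SemidirectProduct.mul_left, conjSignAction_mulSingle,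
        cs.inv_simple, pow_zero, pow_one, one_mul]
    rw [pow_succ, ih, Nat.mul_succ, Finset.prod_range_succ, Finset.prod_range_succ]
    refine SemidirectProduct.ext ?_ (pow_succ ..).symm
    rw [SemidirectProduct.mul_left, hsingle, map_mul, conjSignAction_mulSingle,
      conjSignAction_mulSingle, hconj, hconj, mul_assoc, add_zero]

theorem isLiftable_signedSimple : M.IsLiftable (signedSimple cs) := by
  intro i j
  rw [signedSimple_mul_pow, cs.simple_mul_simple_pow, two_mul, Finset.prod_range_add]
  simp only [pow_add, cs.simple_mul_simple_pow, one_mul, ← Finset.prod_mul_distrib,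
    ← Pi.mulSingle_mul, Int.units_mul_self, Pi.mulSingle_one, Finset.prod_const_one]
  rfl

/-- The `t`-component of the image of `x` under the homomorphism `W → {±1}^W ⋊ W` extending
`signedSimple`; it turns out to be `-1` exactly at the left inversions `t` of `x`. -/
def inversionSign (x t : W) : ℤˣ :=
  (cs.lift ⟨signedSimple cs, isLiftable_signedSimple cs⟩ x).left t

theorem lift_signedSimple_right (x : W) :
    (cs.lift ⟨signedSimple cs, isLiftable_signedSimple cs⟩ x).right = x :=
  DFunLike.congr_fun
    (cs.ext_simple (φ₁ := SemidirectProduct.rightHom.comp (cs.lift ⟨_, isLiftable_signedSimple cs⟩))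
      (φ₂ := MonoidHom.id W) fun i => by
        simp [cs.lift_apply_simple (isLiftable_signedSimple cs), signedSimple]) x

theorem inversionSign_one (t : W) : inversionSign cs 1 t = 1 := by
  rw [inversionSign, map_one, SemidirectProduct.one_left, Pi.one_apply]

theorem inversionSign_simple (i : B) (t : W) :
    inversionSign cs (cs.simple i) t = if t = cs.simple i then -1 else 1 := by
  rw [inversionSign, cs.lift_apply_simple]
  exact Pi.mulSingle_apply (M := ℤˣ) (cs.simple i) (-1) t

theorem inversionSign_mul (x y t : W) :
    inversionSign cs (x * y) t = inversionSign cs x t * inversionSign cs y (x⁻¹ * t * x) := by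
  rw [inversionSign, map_mul, SemidirectProduct.mul_left, lift_signedSimple_right, Pi.mul_apply,
    conjSignAction_apply]
  rfl

theorem inversionSign_inv (x t : W) :
    inversionSign cs x⁻¹ t = inversionSign cs x (x * t * x⁻¹) := by
  have h := inversionSign_mul cs x⁻¹ x t
  rw [inv_mul_cancel, inversionSign_one, inv_inv] at h
  rw [eq_inv_of_mul_eq_one_left h.symm, Int.units_inv_eq_self]

theorem inversionSign_self {t : W} (ht : cs.IsReflection t) : inversionSign cs t t = -1 := by
  obtain ⟨w, i, rfl⟩ := ht
  rw [inversionSign_mul, inversionSign_mul, inversionSign_inv, inversionSign_simple]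
  simp only [mul_assoc, inv_mul_cancel_left, inv_mul_cancel, mul_one, mul_inv_rev, if_true]
  rw [mul_left_comm, Int.units_mul_self, mul_one]

theorem mem_leftInvSeq_of_inversionSign_eq_neg_one (ω : List B) (t : W)
    (h : inversionSign cs (cs.wordProd ω) t = -1) : t ∈ cs.leftInvSeq ω := by
  induction ω generalizing t with
  | nil => simp [inversionSign_one] at h
  | cons i ω ih =>
    rw [CoxeterSystem.leftInvSeq, List.mem_cons]
    by_cases hti : t = cs.simple i
    · exact Or.inl hti
    · rw [cs.wordProd_cons, inversionSign_mul, inversionSign_simple, if_neg hti, one_mul] at h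
      exact Or.inr (List.mem_map.2 ⟨_, ih _ h, by simp [mul_assoc]⟩)

theorem inversionSign_eq_neg_one_iff {x t : W} :
    inversionSign cs x t = -1 ↔ cs.IsLeftInversion x t := by
  have isLeftInversion_of_eq {x : W} (h : inversionSign cs x t = -1) : cs.IsLeftInversion x t := by
    obtain ⟨ω, hω, rfl⟩ := cs.exists_isReduced x
    exact cs.isLeftInversion_of_mem_leftInvSeq hω
      (mem_leftInvSeq_of_inversionSign_eq_neg_one cs ω t h)
  refine ⟨isLeftInversion_of_eq, fun h => ?_⟩
  by_contra hx
  refine h.1.isLeftInversion_mul_right_iff.1 (isLeftInversion_of_eq (x := t * x) ?_) h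
  rw [inversionSign_mul, inversionSign_self cs h.1, inv_mul_cancel, one_mul,
    (Int.units_eq_one_or _).resolve_right hx, mul_one]

theorem isLeftInversion_mul_iff {x y t : W} :
    cs.IsLeftInversion (x * y) t ↔
      ¬(cs.IsLeftInversion x t ↔ cs.IsLeftInversion y (x⁻¹ * t * x)) := by
  simp only [← inversionSign_eq_neg_one_iff, inversionSign_mul]
  rcases Int.units_eq_one_or (inversionSign cs x t) with hx | hx <;>
    rcases Int.units_eq_one_or (inversionSign cs y (x⁻¹ * t * x)) with hy | hy <;>
    simp [hx, hy]

theorem isLeftInversion_conj_iff {x y t : W} :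
    (cs.IsLeftInversion (y⁻¹ * x * y) (y⁻¹ * t * y) ↔ cs.IsLeftInversion y t) ↔
      (cs.IsLeftInversion x t ↔ cs.IsLeftInversion y (x⁻¹ * t * x)) := by
  have hmul : x * y = y * (y⁻¹ * x * y) := by group
  have hxy := isLeftInversion_mul_iff cs (x := x) (y := y) (t := t)
  rw [hmul, isLeftInversion_mul_iff] at hxy
  tauto

theorem isLeftInversion_inv_iff_conj {x t : W} :
    cs.IsLeftInversion x⁻¹ t ↔ cs.IsLeftInversion x (x * t * x⁻¹) := by
  simp only [← inversionSign_eq_neg_one_iff, inversionSign_inv]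

theorem mem_of_forall_isLeftInversion_mem {H : Subgroup W} {x : W}
    (h : ∀ t, cs.IsLeftInversion x t → t ∈ H) : x ∈ H := by
  obtain ⟨ω, hω, rfl⟩ := cs.exists_isReduced x
  rw [← inv_mem_iff, ← cs.prod_leftInvSeq]
  exact H.list_prod_mem fun t ht => h t (cs.isLeftInversion_of_mem_leftInvSeq hω ht)

theorem eq_one_of_forall_not_isLeftInversion {x : W} (h : ∀ t, ¬cs.IsLeftInversion x t) :
    x = 1 :=
  Subgroup.mem_bot.1 (mem_of_forall_isLeftInversion_mem cs fun t ht => (h t ht).elim)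

/-- `H` contains the left inversions of all of its elements, as standard parabolic subgroups do. -/
def IsInversionClosed (H : Subgroup W) : Prop :=
  ∀ x ∈ H, ∀ t, cs.IsLeftInversion x t → t ∈ H

theorem isInversionClosed_closure {I : Set W} (hI : I ⊆ Set.range cs.simple) :
    IsInversionClosed cs (Subgroup.closure I) := by
  intro x hx
  induction hx using Subgroup.closure_induction with
  | mem x hx =>
    obtain ⟨i, rfl⟩ := hI hx
    intro t ht
    rw [← inversionSign_eq_neg_one_iff, inversionSign_simple] at ht
    split_ifs at ht with hti
    · exact hti ▸ Subgroup.subset_closure hx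
    · exact absurd ht (by decide)
  | one => exact fun t ht => absurd ht.2 (by simp)
  | mul x y hx _ ihx ihy =>
    intro t ht
    by_cases hxt : cs.IsLeftInversion x t
    · exact ihx t hxt
    · rw [isLeftInversion_mul_iff] at ht
      have hyt := ihy (x⁻¹ * t * x) (by tauto)
      simpa [mul_assoc] using mul_mem (mul_mem hx hyt) (inv_mem hx)
  | inv x hx ih =>
    intro t ht
    have hxt := ih _ ((isLeftInversion_inv_iff_conj cs).1 ht)
    simpa [mul_assoc] using mul_mem (mul_mem (inv_mem hx) hxt) hx

open DoubleCoset

variable {cs} {H H' : Subgroup W} {d e : W}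

theorem isLeftInversion_mul_of_notMem (hH : IsInversionClosed cs H) {t x : W}
    (ht : cs.IsReflection t) (htH : t ∉ H) (hx : x ∈ H) : cs.IsLeftInversion (t * x) t :=
  ht.isLeftInversion_mul_right_iff.2 fun hxt => htH (hH x hx t hxt)

theorem isLeftInversion_of_length_maximal (hd : ∀ u ∈ H, cs.length (u * d) ≤ cs.length d) {t : W}
    (ht : cs.IsReflection t) (htH : t ∈ H) : cs.IsLeftInversion d t :=
  ⟨ht, (hd t htH).lt_of_ne (ht.length_mul_right_ne d)⟩

theorem not_isLeftInversion_mul_of_length_maximal (hH : IsInversionClosed cs H)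
    (hd : ∀ u ∈ H, cs.length (u * d) ≤ cs.length d) {u t : W} (hu : u ∈ H)
    (ht : cs.IsLeftInversion u t) : ¬cs.IsLeftInversion (u * d) t := by
  have hut : u⁻¹ * t * u ∈ H := mul_mem (mul_mem (inv_mem hu) (hH u hu t ht)) hu
  have hdt : cs.IsLeftInversion d (u⁻¹ * t * u) :=
    isLeftInversion_of_length_maximal hd (by simpa using ht.1.conj u⁻¹) hut
  rw [isLeftInversion_mul_iff, not_not]
  exact iff_of_true ht hdt

theorem eq_one_of_length_maximal_mul (hH : IsInversionClosed cs H)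
    (hd : ∀ u ∈ H, cs.length (u * d) ≤ cs.length d) {u : W} (hu : u ∈ H)
    (hud : cs.length d ≤ cs.length (u * d)) : u = 1 := by
  refine eq_one_of_forall_not_isLeftInversion cs fun t ht => ?_
  refine not_isLeftInversion_mul_of_length_maximal hH hd hu ht
    (isLeftInversion_of_length_maximal (H := H) (fun z hz => ?_) ht.1 (hH u hu t ht))
  rw [← mul_assoc]
  exact (hd _ (mul_mem hz hu)).trans hud

theorem conj_mem_of_length_maximal (hH : IsInversionClosed cs H) (hH' : IsInversionClosed cs H')
    (hd : ∀ u ∈ H, cs.length (u * d) ≤ cs.length d) {u v : W} (hu : u ∈ H) (hv : v ∈ H')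
    (he : ∀ z ∈ H, cs.length (z * (u * d * v)) ≤ cs.length (u * d * v)) :
    d⁻¹ * u * d ∈ H' := by
  have hmem : u ∈ H'.comap (MulAut.conj (u * d)⁻¹).toMonoidHom := by
    refine mem_of_forall_isLeftInversion_mem cs fun t ht => ?_
    have hudt := not_isLeftInversion_mul_of_length_maximal hH hd hu ht
    have het := isLeftInversion_of_length_maximal he ht.1 (hH u hu t ht)
    rw [isLeftInversion_mul_iff] at het
    have hvt := hH' v hv ((u * d)⁻¹ * t * (u * d)) (by tauto)
    simpa only [Subgroup.mem_comap, MulEquiv.coe_toMonoidHom, MulAut.conj_apply, inv_inv]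
  simpa [mul_assoc] using hmem

theorem eq_of_mem_doubleCoset_of_length_maximal (hH : IsInversionClosed cs H)
    (hH' : IsInversionClosed cs H')
    (hd : ∀ y ∈ doubleCoset d H H', cs.length y ≤ cs.length d)
    (he : e ∈ doubleCoset d H H') (hde : cs.length d ≤ cs.length e) : e = d := by
  obtain ⟨u, hu, v, hv, rfl⟩ := mem_doubleCoset.1 he
  have hdl (z : W) (hz : z ∈ H) : cs.length (z * d) ≤ cs.length d := by
    simpa using hd _ (mem_doubleCoset.2 ⟨z, hz, 1, one_mem H', rfl⟩)
  have hdr (z : W) (hz : z ∈ H') : cs.length (z * d⁻¹) ≤ cs.length d⁻¹ := by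
    simpa [← cs.length_inv (z * d⁻¹)] using
      hd _ (mem_doubleCoset.2 ⟨1, one_mem H, z⁻¹, inv_mem hz, rfl⟩)
  have hel (z : W) (hz : z ∈ H) : cs.length (z * (u * d * v)) ≤ cs.length (u * d * v) := by
    simpa [mul_assoc] using
      (hd _ (mem_doubleCoset.2 ⟨z * u, mul_mem hz hu, v, hv, rfl⟩)).trans hde
  have hconj := conj_mem_of_length_maximal hH hH' hdl hu hv hel
  have hv' : d⁻¹ * u * d * v ∈ H' := mul_mem hconj hv
  have he_eq : u * d * v = d * (d⁻¹ * u * d * v) := by group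
  have hinv : (d⁻¹ * u * d * v)⁻¹ = 1 := by
    refine eq_one_of_length_maximal_mul hH' hdr (inv_mem hv') ?_
    rwa [← mul_inv_rev, cs.length_inv, cs.length_inv, ← he_eq]
  rw [he_eq, inv_eq_one.1 hinv, mul_one]

end Inversions

namespace IsDiagAut

variable {cs : CoxeterSystem M W} {f f' : MulAut W}

theorem mul (hf : IsDiagAut cs f) (hf' : IsDiagAut cs f') : IsDiagAut cs (f * f') := by
  rw [IsDiagAut, MulAut.coe_mul, Set.image_comp, hf', hf]

theorem symm (hf : IsDiagAut cs f) : IsDiagAut cs f.symm := by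
  nth_rw 1 [IsDiagAut, ← hf]
  exact f.symm_image_image _

theorem exists_simple_eq (hf : IsDiagAut cs f) (i : B) : ∃ j, cs.simple j = f (cs.simple i) :=
  hf.le (Set.mem_image_of_mem f (Set.mem_range_self i))

theorem length_map_le (hf : IsDiagAut cs f) (w : W) : cs.length (f w) ≤ cs.length w := by
  choose σ hσ using hf.exists_simple_eq
  have map_wordProd (ω : List B) : f (cs.wordProd ω) = cs.wordProd (ω.map σ) := by
    simp only [CoxeterSystem.wordProd, map_list_prod, List.map_map, Function.comp_def, hσ]
  obtain ⟨ω, hω, rfl⟩ := cs.exists_isReduced w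
  rw [map_wordProd, hω.eq, ← List.length_map (as := ω) σ]
  exact cs.length_wordProd_le _

theorem length_map (hf : IsDiagAut cs f) (w : W) : cs.length (f w) = cs.length w :=
  (hf.length_map_le w).antisymm (by simpa using hf.symm.length_map_le (f w))

theorem isReflection_map (hf : IsDiagAut cs f) {t : W} (ht : cs.IsReflection t) :
    cs.IsReflection (f t) := by
  obtain ⟨w, i, rfl⟩ := ht
  obtain ⟨j, hj⟩ := hf.exists_simple_eq i
  exact ⟨f w, j, by rw [map_mul, map_mul, map_inv, hj]⟩

theorem isLeftInversion_map_iff (hf : IsDiagAut cs f) {x t : W} :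
    cs.IsLeftInversion (f x) (f t) ↔ cs.IsLeftInversion x t := by
  rw [CoxeterSystem.IsLeftInversion, ← map_mul, hf.length_map, hf.length_map]
  exact and_congr_left' ⟨fun h => by simpa using hf.symm.isReflection_map h, hf.isReflection_map⟩

end IsDiagAut

namespace AffineData

variable {cs : CoxeterSystem M W} (D : AffineData cs)

instance : D.Lam.Normal := D.hLam_normal

instance : D.Lam.FiniteIndex := D.hLam_index

theorem isDiagAut_st : IsDiagAut cs D.st :=
  Set.Subset.antisymm (Set.image_subset_iff.2 D.hst_S) fun s hs =>
    ⟨D.st s, D.hst_S s hs, D.hst_inv s⟩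

theorem isInversionClosed_WJ : IsInversionClosed cs D.WJ :=
  isInversionClosed_closure cs Set.sdiff_subset

theorem eq_of_mem_WJ_of_mk_eq {a b : W} (ha : a ∈ D.WJ) (hb : b ∈ D.WJ)
    (hab : (a : W ⧸ D.Lam) = b) : a = b := by
  refine (D.hs0_hyper a).unique ⟨ha, by simp⟩ ⟨hb, ?_⟩
  rwa [← div_eq_mul_inv, ← QuotientGroup.eq_iff_div_mem]

theorem exists_mul_eq (w : W) : ∃ u ∈ D.WJ, ∃ l ∈ D.Lam, u * l = w := by
  refine ⟨D.pr w, (D.hpr w).1, (D.pr w)⁻¹ * w, ?_, mul_inv_cancel_left _ _⟩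
  exact (D.hLam_normal.mem_comm_iff).1 (D.hpr w).2

theorem eq_one_of_mem_Lam_of_mul_self {l : W} (hl : l ∈ D.Lam) (h : l * l = 1) : l = 1 := by
  have := D.freeIso.injective.isMulTorsionFree D.freeIso.toMonoidHom
  have hsq : (⟨l, hl⟩ : D.Lam) ^ 2 = 1 := Subtype.ext ((pow_two l).trans h)
  exact congrArg Subtype.val ((pow_eq_one_iff_left two_ne_zero).1 hsq)

theorem mem_Lam_of_forall_commute {w : W} (h : ∀ l ∈ D.Lam, Commute w l) : w ∈ D.Lam := by
  have hle : D.Lam ≤ Subgroup.centralizer {w} := fun l hl =>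
    Subgroup.mem_centralizer_singleton_iff.2 (h l hl).symm
  have hindex := (Subgroup.finiteIndex_of_le hle).index_ne_zero
  have horbit : (Subgroup.centralizer {w}).index = (MulAction.orbit (ConjAct W) w).ncard := by
    rw [← MulAction.index_stabilizer, Subgroup.centralizer_eq_comap_stabilizer]
    exact Subgroup.index_comap_of_surjective _ ConjAct.toConjAct.surjective
  rw [horbit] at hindex
  refine (D.hLam_mem w).2 ((Set.finite_of_ncard_ne_zero hindex).subset fun x hx => ?_)
  exact ConjAct.mem_orbit_conjAct.2 (isConj_comm.1 hx)

theorem commute_of_conj_mem_WJ {u l : W} (hu : u ∈ D.WJ) (hl : l ∈ D.Lam)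
    (h : l * u * l⁻¹ ∈ D.WJ) : Commute l u := by
  refine mul_inv_eq_iff_eq_mul.1 (D.eq_of_mem_WJ_of_mk_eq h hu ?_)
  rw [QuotientGroup.mk_mul, QuotientGroup.mk_mul, QuotientGroup.mk_inv,
    (QuotientGroup.eq_one_iff l).2 hl, one_mul, inv_one, mul_one]

/-- `f` is a diagram automorphism acting on `Λ` by `λ ↦ -ᵍλ`, where `g ∈ W_J`; these are the
elements of `A_Λ*`. -/
structure IsOppositeTwist (f : MulAut W) (g : W) : Prop where
  isDiagAut : IsDiagAut cs f
  mem_WJ : g ∈ D.WJ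
  map_Lam : ∀ l ∈ D.Lam, f l = g * l⁻¹ * g⁻¹

variable {D} {f : MulAut W} {g : W}

theorem InALamStar.exists_isOppositeTwist (hf : D.InALamStar f) : ∃ g, D.IsOppositeTwist f g := by
  obtain ⟨a, ⟨ha, w, hw, haw⟩, rfl⟩ := hf
  refine ⟨w * D.wJ, ha.mul D.isDiagAut_st, mul_mem hw D.hwJ_mem, fun l hl => ?_⟩
  have hconj : (D.wJ * l * D.wJ⁻¹)⁻¹ ∈ D.Lam := inv_mem (D.hLam_normal.conj_mem l hl _)
  rw [MulAut.mul_apply, D.hst_Lam l hl, haw _ hconj]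
  group

theorem map_WJ_eq_closure (hf : IsDiagAut cs f) :
    D.WJ.map f.toMonoidHom = Subgroup.closure (Set.range cs.simple \ {f D.s0}) := by
  rw [WJ, MonoidHom.map_closure, Jset]
  congr 1
  exact (Set.image_sdiff f.injective _ _).trans (by rw [hf, Set.image_singleton])

namespace IsOppositeTwist

theorem isInversionClosed_map_WJ (hf : D.IsOppositeTwist f g) :
    IsInversionClosed cs (D.WJ.map f.toMonoidHom) := by
  rw [map_WJ_eq_closure hf.isDiagAut]
  exact isInversionClosed_closure cs Set.sdiff_subset

theorem mk_map (hf : D.IsOppositeTwist f g) (x : W) :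
    ((f x : W) : W ⧸ D.Lam) = (g * x * g⁻¹ : W) := by
  refine QuotientGroup.eq.2 (D.mem_Lam_of_forall_commute fun l hl => ?_)
  have hm : g⁻¹ * l⁻¹ * g ∈ D.Lam := by
    simpa using D.hLam_normal.conj_mem _ (inv_mem hl) g⁻¹
  have hfm : f (g⁻¹ * l⁻¹ * g) = l := by rw [hf.map_Lam _ hm]; group
  have hconj : f x * l * (f x)⁻¹ = g * x * g⁻¹ * l * (g * x * g⁻¹)⁻¹ := by
    calc f x * l * (f x)⁻¹ = f (x * (g⁻¹ * l⁻¹ * g) * x⁻¹) := by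
          rw [map_mul, map_mul, hfm, map_inv]
      _ = g * (x * (g⁻¹ * l⁻¹ * g) * x⁻¹)⁻¹ * g⁻¹ :=
          hf.map_Lam _ (D.hLam_normal.conj_mem _ hm x)
      _ = g * x * g⁻¹ * l * (g * x * g⁻¹)⁻¹ := by group
  rw [mul_inv_eq_iff_eq_mul] at hconj
  rw [commute_iff_eq, mul_assoc, inv_mul_eq_iff_eq_mul, ← mul_assoc, ← mul_assoc, hconj]
  group

theorem isLeftInversion_map_iff_of_mem_Lam (hf : D.IsOppositeTwist f g) {l t : W}
    (hl : l ∈ D.Lam) :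
    cs.IsLeftInversion l (f t) ↔ cs.IsLeftInversion (g⁻¹ * l⁻¹ * g) t := by
  have hmap : f (g⁻¹ * l⁻¹ * g) = l := by
    rw [hf.map_Lam _ (by simpa using D.hLam_normal.conj_mem _ (inv_mem hl) g⁻¹)]
    group
  rw [← hf.isDiagAut.isLeftInversion_map_iff (x := g⁻¹ * l⁻¹ * g), hmap]

-- The mirrors of `t` and `t' = f (g⁻¹ t g)` are parallel, and if they differed the fundamental
-- alcove would lie between them. As `f` preserves this alcove, `g` could then not move it across
-- the mirror of `t`.
theorem mem_map_WJ_of_isLeftInversion (hf : D.IsOppositeTwist f g) {t : W}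
    (ht : cs.IsLeftInversion g t) : t ∈ D.WJ.map f.toMonoidHom := by
  by_contra htH
  have htJ : t ∈ D.WJ := D.isInversionClosed_WJ g hf.mem_WJ t ht
  have hconj_mem : g⁻¹ * t * g ∈ D.WJ := mul_mem (mul_mem (inv_mem hf.mem_WJ) htJ) hf.mem_WJ
  obtain ⟨t', ht'⟩ : ∃ t', f (g⁻¹ * t * g) = t' := ⟨_, rfl⟩
  have ht'H : t' ∈ D.WJ.map f.toMonoidHom := ⟨_, hconj_mem, ht'⟩
  have ht'_refl : cs.IsReflection t' :=
    ht' ▸ hf.isDiagAut.isReflection_map (by simpa using ht.1.conj g⁻¹)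
  have hne : t' ≠ t := fun h => htH (h ▸ ht'H)
  have hmk : (t' : W ⧸ D.Lam) = t := by
    rw [← ht', hf.mk_map]
    congr 1
    group
  have ht'J : t' ∉ D.WJ := fun h => hne (D.eq_of_mem_WJ_of_mk_eq h htJ hmk)
  have htrans : t' * t ∈ D.Lam := by
    simpa only [ht'_refl.inv] using QuotientGroup.eq.1 hmk
  have hinv_t : cs.IsLeftInversion (t' * t)⁻¹ t := by
    rw [mul_inv_rev, ht.1.inv, ht'_refl.inv]
    exact isLeftInversion_mul_of_notMem hf.isInversionClosed_map_WJ ht.1 htH ht'H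
  have hinv_conj : cs.IsLeftInversion (g⁻¹ * (t' * t)⁻¹ * g) (g⁻¹ * t * g) := by
    rw [← hf.isLeftInversion_map_iff_of_mem_Lam htrans, ht']
    exact isLeftInversion_mul_of_notMem D.isInversionClosed_WJ ht'_refl ht'J htJ
  have hinv_g : cs.IsLeftInversion g (t' * t * t * (t' * t)⁻¹) := by
    have hiff := isLeftInversion_conj_iff cs (x := (t' * t)⁻¹) (y := g) (t := t)
    rw [inv_inv] at hiff
    tauto
  have hcomm : Commute (t' * t) t :=
    D.commute_of_conj_mem_WJ htJ htrans (D.isInversionClosed_WJ g hf.mem_WJ _ hinv_g)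
  have hsq : t' * t * (t' * t) = 1 := by
    rw [mul_assoc, ← hcomm.eq, mul_assoc, ht.1.mul_self, mul_one, ht'_refl.mul_self]
  have htriv : t' * t = 1 := D.eq_one_of_mem_Lam_of_mul_self htrans hsq
  exact hne ((eq_inv_of_mul_eq_one_left htriv).trans ht.1.inv)

theorem mem_map_WJ (hf : D.IsOppositeTwist f g) : g ∈ D.WJ.map f.toMonoidHom :=
  mem_of_forall_isLeftInversion_mem cs fun _ ht => hf.mem_map_WJ_of_isLeftInversion ht

theorem map_inv_mem_doubleCoset_self (hf : D.IsOppositeTwist f g) (y : W) :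
    (f y)⁻¹ ∈ DoubleCoset.doubleCoset y D.WJ (D.WJ.map f.toMonoidHom) := by
  obtain ⟨u, hu, l, hl, rfl⟩ := D.exists_mul_eq y
  refine DoubleCoset.mem_doubleCoset.2 ⟨g * u⁻¹, mul_mem hf.mem_WJ (inv_mem hu),
    g⁻¹ * (f u)⁻¹, mul_mem (inv_mem hf.mem_map_WJ) (inv_mem (Subgroup.mem_map_of_mem _ hu)), ?_⟩
  rw [map_mul, hf.map_Lam l hl]
  group

theorem map_inv_mem_doubleCoset (hf : D.IsOppositeTwist f g) {x y : W}
    (hy : y ∈ DoubleCoset.doubleCoset x D.WJ (D.WJ.map f.toMonoidHom)) :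
    (f y)⁻¹ ∈ DoubleCoset.doubleCoset x D.WJ (D.WJ.map f.toMonoidHom) := by
  rw [← DoubleCoset.doubleCoset_eq_of_mem hy]
  exact hf.map_inv_mem_doubleCoset_self y

theorem map_eq_inv_of_length_maximal (hf : D.IsOppositeTwist f g) {d : W}
    (hd : ∀ y ∈ DoubleCoset.doubleCoset d D.WJ (D.WJ.map f.toMonoidHom),
      cs.length y ≤ cs.length d) : f d = d⁻¹ := by
  rw [← inv_eq_iff_eq_inv]
  refine (eq_of_mem_doubleCoset_of_length_maximal D.isInversionClosed_WJ
    hf.isInversionClosed_map_WJ hd (hf.map_inv_mem_doubleCoset_self d) ?_)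
  rw [cs.length_inv, hf.isDiagAut.length_map]

end IsOppositeTwist

theorem DCosetDia_map_eq_doubleCoset (hf : IsDiagAut cs f) (x : W) :
    D.DCosetDia (f D.s0) x = DoubleCoset.doubleCoset x D.WJ (D.WJ.map f.toMonoidHom) := by
  rw [map_WJ_eq_closure hf]
  ext y
  exact DoubleCoset.mem_doubleCoset.symm

end AffineData

/-- Each double coset `W_J x W_J^◇` in `W` is stable under the
anti-involution `w ↦ ◇(w)⁻¹`.  In particular, the unique longest element of each
`(W_J, W_J^◇)`-double coset belongs to `I_◇`. -/
theorem dcoset_stable_under_dia (cs : CoxeterSystem M W) (D : AffineData cs)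
    (s1 : W) (hs1_S : s1 ∈ Set.range cs.simple)
    (hs1_hyper : ∀ w : W, ∃! u : W,
      u ∈ Subgroup.closure (Set.range cs.simple \ {s1}) ∧ w * u⁻¹ ∈ D.Lam)
    (dia : MulAut W) (hdia : D.InALamStar dia) (hdia_s0 : dia D.s0 = s1) :
    (∀ x y : W, y ∈ D.DCosetDia s1 x → (dia y)⁻¹ ∈ D.DCosetDia s1 x)
      ∧ ∀ x d : W, d ∈ D.DCosetDia s1 x →
          (∀ y ∈ D.DCosetDia s1 x, cs.length y ≤ cs.length d) → dia d = d⁻¹ := by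
  subst hdia_s0
  obtain ⟨g, hg⟩ := hdia.exists_isOppositeTwist
  simp only [AffineData.DCosetDia_map_eq_doubleCoset hg.isDiagAut]
  refine ⟨fun x y hy => hg.map_inv_mem_doubleCoset hy, fun x d hd hmax => ?_⟩
  rw [← DoubleCoset.doubleCoset_eq_of_mem hd] at hmax
  exact hg.map_eq_inv_of_length_maximal hmax

end LY
end
end

section
/- Every element of the coset A_Λ* = {a∘* : a ∈ A_Λ} ⊆ Aut(W,S) has order at most two (is an involution); moreover A_Λ* = *A_Λ. -/
set_option synthInstance.maxHeartbeats 1000000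
set_option maxHeartbeats 2000000

open scoped Classical

noncomputable section

namespace LY

variable {B W : Type} [Group W] {M : CoxeterMatrix B}

/-!
Let `Λ` be a self-centralizing normal subgroup of a Coxeter group `W` and let `c` preserve `S` and
act on `Λ` as `l ↦ (v l v⁻¹)⁻¹`. The automorphism `d = Ad(v)⁻¹ ∘ c` inverts `Λ`; comparing
`d (y l y⁻¹) = (y l y⁻¹)⁻¹` with `d y * d l * (d y)⁻¹` shows that `y⁻¹ * d y` centralizes `Λ`, so
it lies in `Λ` and is inverted by `d`, which says `d² = 1`. Therefore `c² = Ad(x)` with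
`x = c v * v`, and `Ad(x)` preserves `S`.

Such an `x` is trivial as soon as no simple reflection has a finite conjugacy class: the set
of inversions of `x` is finite, but the cocycle identity applied to `x * u = (x u x⁻¹) * x` shows
that it is stable under conjugation by every `u`.
-/

open scoped Pointwise

section InversionParity

variable {B W : Type*} [Group W] {M : CoxeterMatrix B} (cs : CoxeterSystem M W)

open CoxeterSystem (alternatingWord)

/-- The action of a reflection `t` on signed reflections: conjugation by `t`, with the sign flipped
exactly at `t` itself. It is defined on all of `W × ZMod 2`, so that no subtype of reflections is
needed. -/
def signedConjStep (t : W) : Function.End (W × ZMod 2) :=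
  fun p ↦ (t * p.1 * t⁻¹, p.2 + if p.1 = t then 1 else 0)

theorem prod_map_signedConjStep_apply (ω : List B) (r : W) (e : ZMod 2) :
    (ω.map fun i ↦ signedConjStep (cs.simple i)).prod (r, e) =
      (cs.wordProd ω * r * (cs.wordProd ω)⁻¹, e + (cs.rightInvSeq ω).count r) := by
  induction ω with
  | nil => simp [Function.End.one_def]
  | cons i ω ih =>
    have hflip : cs.wordProd ω * r * (cs.wordProd ω)⁻¹ = cs.simple i ↔
        (cs.wordProd ω)⁻¹ * cs.simple i * cs.wordProd ω = r := by
      rw [mul_inv_eq_iff_eq_mul, ← eq_inv_mul_iff_mul_eq, eq_comm, mul_assoc]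
    rw [List.map_cons, List.prod_cons]
    change signedConjStep (cs.simple i)
      ((ω.map fun i ↦ signedConjStep (cs.simple i)).prod (r, e)) = _
    rw [ih, cs.wordProd_cons, CoxeterSystem.rightInvSeq, List.count_cons]
    simp only [signedConjStep, hflip, beq_iff_eq, Nat.cast_add, Nat.cast_ite, Nat.cast_one,
      Nat.cast_zero, add_assoc]
    simp only [mul_inv_rev, mul_assoc]

theorem prod_map_reverse_alternatingWord {G : Type*} [Monoid G] (f : B → G) (i j : B) (m : ℕ) :
    ((alternatingWord j i (2 * m)).reverse.map f).prod = (f i * f j) ^ m := by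
  induction m with
  | zero => simp [alternatingWord]
  | succ m ih =>
    rw [List.map_reverse] at ih
    simp [Nat.mul_succ, alternatingWord, ih, pow_succ', mul_assoc]

theorem leftInvSeq_alternatingWord_two_mul (i j : B) (m : ℕ) :
    cs.leftInvSeq (alternatingWord j i (2 * m)) =
      (List.range (2 * m)).map fun k ↦ cs.simple j * (cs.simple i * cs.simple j) ^ k := by
  refine List.ext_getElem (by simp) fun k hk _ ↦ ?_
  have hodd : ¬ Even (2 * k + 1) := by simp
  have hhalf : (2 * k + 1) / 2 = k := by lia
  rw [cs.getElem_leftInvSeq_alternatingWord j i m k (by simpa using hk),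
    cs.prod_alternatingWord_eq_mul_pow, if_neg hodd, hhalf, List.getElem_map, List.getElem_range]

/-- Each reflection of the dihedral relation occurs in both halves of the inversion sequence. -/
theorem even_count_leftInvSeq_alternatingWord (i j : B) (r : W) :
    Even ((cs.leftInvSeq (alternatingWord j i (2 * M i j))).count r) := by
  have hperiod : ∀ k, (cs.simple i * cs.simple j) ^ (M i j + k) =
      (cs.simple i * cs.simple j) ^ k := fun k ↦ by
    rw [pow_add, cs.simple_mul_simple_pow, one_mul]
  rw [leftInvSeq_alternatingWord_two_mul, two_mul, List.range_add, List.map_append, List.map_map,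
    List.count_append]
  simp only [Function.comp_def, hperiod]
  exact ⟨_, rfl⟩

theorem isLiftable_signedConjStep : M.IsLiftable fun i ↦ signedConjStep (cs.simple i) := by
  intro i j
  funext ⟨r, e⟩
  have hcount := even_count_leftInvSeq_alternatingWord cs i j r
  have hprod : cs.wordProd (alternatingWord j i (2 * M i j)).reverse = 1 := by
    rw [CoxeterSystem.wordProd, prod_map_reverse_alternatingWord, cs.simple_mul_simple_pow]
  rw [← prod_map_reverse_alternatingWord (fun i ↦ signedConjStep (cs.simple i)),
    prod_map_signedConjStep_apply, hprod, cs.rightInvSeq_reverse, List.count_reverse,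
    (ZMod.natCast_eq_zero_iff_even).mpr hcount]
  simp [Function.End.one_def]

/-- The action of `W` on signed reflections. -/
def signedConj : W →* Function.End (W × ZMod 2) :=
  cs.lift ⟨_, isLiftable_signedConjStep cs⟩

/-- The number modulo `2` of occurrences of `r` in the right inversion sequence of any word for
`w`; for a reflection `r` it is `1` exactly when `r` is a right inversion of `w`. -/
def inversionParity (w r : W) : ZMod 2 := (signedConj cs w (r, 0)).2

theorem signedConj_wordProd (ω : List B) :
    signedConj cs (cs.wordProd ω) = (ω.map fun i ↦ signedConjStep (cs.simple i)).prod := by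
  rw [CoxeterSystem.wordProd, map_list_prod, List.map_map]
  congr 2
  funext i
  exact cs.lift_apply_simple (isLiftable_signedConjStep cs) i

theorem inversionParity_wordProd (ω : List B) (r : W) :
    inversionParity cs (cs.wordProd ω) r = (cs.rightInvSeq ω).count r := by
  rw [inversionParity, signedConj_wordProd, prod_map_signedConjStep_apply, zero_add]

theorem signedConj_apply (w r : W) (e : ZMod 2) :
    signedConj cs w (r, e) = (w * r * w⁻¹, e + inversionParity cs w r) := by
  obtain ⟨ω, rfl⟩ := cs.wordProd_surjective w
  rw [inversionParity_wordProd, signedConj_wordProd, prod_map_signedConjStep_apply]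

theorem inversionParity_mul (u w r : W) :
    inversionParity cs (u * w) r =
      inversionParity cs w r + inversionParity cs u (w * r * w⁻¹) := by
  have hmul : signedConj cs (u * w) (r, 0) = signedConj cs u (signedConj cs w (r, 0)) :=
    congrFun (map_mul (signedConj cs) u w) (r, 0)
  rw [inversionParity, hmul, signedConj_apply, signedConj_apply, zero_add]

theorem inversionParity_simple (i : B) (r : W) :
    inversionParity cs (cs.simple i) r = if r = cs.simple i then 1 else 0 := by
  rw [← cs.wordProd_singleton, inversionParity_wordProd, cs.rightInvSeq_singleton,
    List.count_singleton, cs.wordProd_singleton]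
  simp only [beq_iff_eq, eq_comm (b := r), Nat.cast_ite, Nat.cast_one, Nat.cast_zero]

theorem finite_setOf_inversionParity_ne_zero (w : W) :
    {r | inversionParity cs w r ≠ 0}.Finite := by
  obtain ⟨ω, rfl⟩ := cs.wordProd_surjective w
  refine (cs.rightInvSeq ω).finite_toSet.subset fun r hr ↦ ?_
  by_contra hmem
  exact hr (by rw [inversionParity_wordProd, List.count_eq_zero_of_not_mem hmem, Nat.cast_zero])

theorem exists_simple_inversionParity_ne_zero {w : W} (hw : w ≠ 1) :
    ∃ i, inversionParity cs w (cs.simple i) ≠ 0 := by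
  obtain ⟨ω, hω, rfl⟩ := cs.exists_isReduced w
  obtain rfl | ⟨ω, i, rfl⟩ := ω.eq_nil_or_concat
  · exact absurd cs.wordProd_nil hw
  have hmem : cs.simple i ∈ cs.rightInvSeq (ω.concat i) := by
    rw [cs.rightInvSeq_concat]
    simp
  refine ⟨i, ?_⟩
  rw [inversionParity_wordProd, List.count_eq_one_of_mem hω.nodup_rightInvSeq hmem]
  simp

end InversionParity

section DiagramAutomorphisms

variable {B W : Type*} [Group W] {M : CoxeterMatrix B} (cs : CoxeterSystem M W)

/-- The group `Aut(W,S)` of automorphisms of `W` preserving the set `S` of simple reflections. -/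
def diagramAut : Subgroup (MulAut W) :=
  MulAction.stabilizer (MulAut W) (Set.range cs.simple)

variable {cs}

theorem inversionParity_conj {x : W} (hx : MulAut.conj x ∈ diagramAut cs) (u r : W) :
    inversionParity cs x (u * r * u⁻¹) = inversionParity cs x r := by
  induction u using cs.simple_induction_left with
  | one => simp
  | mul_simple_left u i ih =>
    obtain ⟨j, hj⟩ : x * cs.simple i * x⁻¹ ∈ Set.range cs.simple :=
      (MulAction.mem_stabilizer_set.mp hx _).mpr ⟨i, rfl⟩
    set t := u * r * u⁻¹
    have hcomm : x * cs.simple i = cs.simple j * x := by rw [hj, inv_mul_cancel_right]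
    have hfix : x * t * x⁻¹ = cs.simple j ↔ t = cs.simple i := by
      rw [hj, mul_left_inj, mul_right_inj]
    have hcocycle := congrArg (inversionParity cs · t) hcomm
    simp only [inversionParity_mul, inversionParity_simple, hfix] at hcocycle
    rw [← ih, ← add_left_cancel (hcocycle.trans (add_comm _ _))]
    simp only [t, mul_inv_rev, mul_assoc]

theorem eq_one_of_conj_mem_diagramAut (hS : ∀ i, (conjugatesOf (cs.simple i)).Infinite) {x : W}
    (hx : MulAut.conj x ∈ diagramAut cs) : x = 1 := by
  by_contra hne
  obtain ⟨i, hi⟩ := exists_simple_inversionParity_ne_zero cs hne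
  refine hS i ((finite_setOf_inversionParity_ne_zero cs x).subset fun r hr ↦ ?_)
  obtain ⟨u, rfl⟩ := isConj_iff.mp hr
  rwa [Set.mem_ofPred_eq, inversionParity_conj hx]

end DiagramAutomorphisms

section NormalSubgroups

variable {G : Type*} [Group G] {N : Subgroup G}

theorem mul_self_eq_one_of_forall_apply_eq_inv [N.Normal]
    (hN : Subgroup.centralizer (N : Set G) ≤ N) {d : MulAut G} (hd : ∀ l ∈ N, d l = l⁻¹) :
    d * d = 1 := by
  ext y
  have hconj : ∀ l ∈ N, d y * l * (d y)⁻¹ = y * l * y⁻¹ := fun l hl ↦ by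
    have h := hd _ (‹N.Normal›.conj_mem l hl y)
    rw [map_mul, map_mul, map_inv, hd l hl] at h
    simpa [mul_assoc] using congrArg (·⁻¹) h
  have hmem : y⁻¹ * d y ∈ N := hN <| Subgroup.mem_centralizer_iff.mpr fun l hl ↦ by
    calc l * (y⁻¹ * d y) = y⁻¹ * (y * l * y⁻¹) * d y := by group
      _ = y⁻¹ * (d y * l * (d y)⁻¹) * d y := by rw [hconj l hl]
      _ = y⁻¹ * d y * l := by group
  have h := hd _ hmem
  rw [map_mul, map_inv, mul_inv_rev, inv_inv] at h
  exact mul_left_cancel h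

theorem mul_self_eq_conj_of_forall_apply_eq_inv_conj [N.Normal]
    (hN : Subgroup.centralizer (N : Set G) ≤ N) {c : MulAut G} {v : G}
    (hc : ∀ l ∈ N, c l = (v * l * v⁻¹)⁻¹) : c * c = MulAut.conj (c v * v) := by
  have hd : ∀ l ∈ N, (MulAut.conj v⁻¹ * c) l = l⁻¹ := fun l hl ↦ by
    simp [hc l hl, mul_assoc]
  ext y
  have h : v⁻¹ * ((c v)⁻¹ * c (c y) * c v) * v = y := by
    simpa using DFunLike.congr_fun (mul_self_eq_one_of_forall_apply_eq_inv hN hd) y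
  rw [MulAut.mul_apply, MulAut.conj_apply]
  conv_rhs => rw [← h]
  group

theorem finite_conjugatesOf_of_mem_centralizer [N.FiniteIndex] {y : G}
    (hy : y ∈ Subgroup.centralizer (N : Set G)) : (conjugatesOf y).Finite := by
  refine (Set.finite_range fun q : G ⧸ N ↦ q.out * y * q.out⁻¹).subset fun z hz ↦ ?_
  obtain ⟨u, rfl⟩ := isConj_iff.mp hz
  obtain ⟨l, hl⟩ := QuotientGroup.mk_out_eq_mul N u
  have hly : l * y = y * l := Subgroup.mem_centralizer_iff.mp hy l l.2
  refine ⟨u, ?_⟩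
  calc (u : G ⧸ N).out * y * (u : G ⧸ N).out⁻¹ = u * (l * y) * ((l : G)⁻¹ * u⁻¹) := by
        rw [hl, mul_inv_rev, mul_assoc u]
    _ = u * y * u⁻¹ := by rw [hly]; group

variable (N) in
/-- The automorphisms of `G` acting on the normal subgroup `N` as conjugation by some element
of `H`. -/
def autActingByConj [N.Normal] (H : Subgroup G) : Subgroup (MulAut G) where
  carrier := {a | ∃ w ∈ H, ∀ l ∈ N, a l = w * l * w⁻¹}
  one_mem' := ⟨1, H.one_mem, by simp⟩
  mul_mem' := by
    rintro a b ⟨u, hu, ha⟩ ⟨w, hw, hb⟩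
    refine ⟨u * w, H.mul_mem hu hw, fun l hl ↦ ?_⟩
    rw [MulAut.mul_apply, hb l hl, ha _ (‹N.Normal›.conj_mem l hl w)]
    group
  inv_mem' := by
    rintro a ⟨w, hw, ha⟩
    refine ⟨w⁻¹, H.inv_mem hw, fun l hl ↦ ?_⟩
    rw [MulAut.inv_apply, MulEquiv.symm_apply_eq, ha _ (‹N.Normal›.conj_mem l hl w⁻¹)]
    group

end NormalSubgroups

section Coset

variable {B W : Type*} [Group W] {M : CoxeterMatrix B} {cs : CoxeterSystem M W}

theorem mul_self_eq_one_of_mem_diagramAut (hS : ∀ i, (conjugatesOf (cs.simple i)).Infinite)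
    {N : Subgroup W} [N.Normal] (hN : Subgroup.centralizer (N : Set W) ≤ N) {c : MulAut W}
    (hc : c ∈ diagramAut cs) {v : W} (hcN : ∀ l ∈ N, c l = (v * l * v⁻¹)⁻¹) : c * c = 1 := by
  have hsq := mul_self_eq_conj_of_forall_apply_eq_inv_conj hN hcN
  have hx : c v * v = 1 :=
    eq_one_of_conj_mem_diagramAut hS (hsq ▸ (diagramAut cs).mul_mem hc hc)
  rw [hsq, hx, map_one]

theorem coset_ALam_star_involutions_general (hS : ∀ i, (conjugatesOf (cs.simple i)).Infinite)
    {N : Subgroup W} [N.Normal] (hN : Subgroup.centralizer (N : Set W) ≤ N) (H : Subgroup W)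
    {σ : MulAut W} (hσ : σ ∈ diagramAut cs) {v : W} (hσN : ∀ l ∈ N, σ l = (v * l * v⁻¹)⁻¹) :
    (∀ c : MulAut W, (∃ a ∈ diagramAut cs ⊓ autActingByConj N H, c = a * σ) → c * c = 1)
      ∧ {c : MulAut W | ∃ a ∈ diagramAut cs ⊓ autActingByConj N H, c = a * σ}
          = {c : MulAut W | ∃ a ∈ diagramAut cs ⊓ autActingByConj N H, c = σ * a} := by
  set A := diagramAut cs ⊓ autActingByConj N H
  have hinvol : ∀ a ∈ A, a * σ * (a * σ) = 1 := by
    rintro a ⟨ha, w, -, haN⟩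
    refine mul_self_eq_one_of_mem_diagramAut hS hN (mul_mem ha hσ) (v := w * v) fun l hl ↦ ?_
    rw [MulAut.mul_apply, hσN l hl, map_inv, haN _ (‹N.Normal›.conj_mem l hl v)]
    group
  have hσσ : σ⁻¹ = σ := inv_eq_of_mul_eq_one_left (by simpa using hinvol 1 A.one_mem)
  have hcomm : ∀ a ∈ A, a * σ = σ * a⁻¹ := fun a ha ↦ by
    rw [eq_inv_of_mul_eq_one_left (hinvol a ha), mul_inv_rev, hσσ]
  refine ⟨?_, Set.Subset.antisymm ?_ ?_⟩
  · rintro _ ⟨a, ha, rfl⟩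
    exact hinvol a ha
  · rintro _ ⟨a, ha, rfl⟩
    exact ⟨a⁻¹, A.inv_mem ha, hcomm a ha⟩
  · rintro _ ⟨a, ha, rfl⟩
    exact ⟨a⁻¹, A.inv_mem ha, by rw [hcomm _ (A.inv_mem ha), inv_inv]⟩

end Coset

namespace AffineData

variable {cs : CoxeterSystem M W}

theorem centralizer_Lam_le (D : AffineData cs) :
    Subgroup.centralizer (D.Lam : Set W) ≤ D.Lam := fun y hy ↦
  have := D.hLam_index
  (D.hLam_mem y).mpr (finite_conjugatesOf_of_mem_centralizer hy)

theorem infinite_conjugatesOf_simple (D : AffineData cs) (i : B) :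
    (conjugatesOf (cs.simple i)).Infinite := by
  intro hfin
  have hmem : cs.simple i ∈ D.Lam := (D.hLam_mem _).mpr hfin
  have hsq : D.freeIso ⟨cs.simple i, hmem⟩ ^ 2 = 1 := by
    rw [← map_pow]
    simp [Subtype.ext_iff]
  have hone : cs.simple i = 1 := by
    simpa [Subtype.ext_iff] using (pow_eq_one_iff_left two_ne_zero).mp hsq
  simpa [hone] using cs.length_simple i

theorem st_mem_diagramAut (D : AffineData cs) : D.st ∈ diagramAut cs :=
  MulAction.mem_stabilizer_set.mpr fun w ↦
    ⟨fun h ↦ D.hst_inv w ▸ D.hst_S _ h, D.hst_S w⟩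

end AffineData

/-- Every element of the coset `A_Λ* = {a ∘ * : a ∈ A_Λ} ⊆ Aut(W,S)` has
order at most two (is an involution); moreover `A_Λ* = *A_Λ`. -/
theorem coset_ALam_star_involutions (cs : CoxeterSystem M W) (D : AffineData cs) :
    (∀ c : MulAut W, D.InALamStar c → c * c = 1)
      ∧ {c : MulAut W | D.InALamStar c}
          = {c : MulAut W | ∃ a : MulAut W, D.InALam a ∧ c = D.st * a} := by
  have := D.hLam_normal
  exact coset_ALam_star_involutions_general D.infinite_conjugatesOf_simple D.centralizer_Lam_le
    D.WJ D.st_mem_diagramAut D.hst_Lam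

end LY
end
end
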